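/- Let n ≥ 1, m ≤ 0, 1 ≥ ρ ≥ δ ≥ 0 with δ < 1, and let a ∈ 𝒮(ℝⁿ) with ‖a‖_{L²(ℝⁿ)} = 1. For every σ ∈ S^m_{ρ,δ}(ℝⁿ) there exists τ ∈ S^{m−(ρ−δ)}_{ρ,δ}(ℝⁿ) such that for all f ∈ 𝒮(ℝⁿ) and x ∈ ℝⁿ, Op^{Wick,a}(σ)f(x) = ∫_{ℝⁿ} e^{2πi x·ξ} ( (σ∗|a|²)(x,ξ) + τ(x,ξ) ) 𝓕f(ξ) dξ, where (σ∗|a|²)(x,ξ) = ∫_{ℝⁿ} |a(z)|² σ(x−z, ξ) dz. That is, Op^{Wick,a}(σ) − Op^{KN}(σ∗|a|²) is a Kohn–Nirenberg operator of order m−(ρ−δ). (Proposition A.2(2), Euclidean analogue of Lemma 3.5(2)/Lemma 5.4(2).) -/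

import Mathlib

open MeasureTheory Complex

noncomputable section

/-- `e^{2πit}`. -/
def expi (t : ℝ) : ℂ := Complex.exp (2 * (Real.pi : ℂ) * Complex.I * (t : ℂ))

/-- Dot product on `ℝⁿ`. -/
def dotp {n : ℕ} (x y : Fin n → ℝ) : ℝ := ∑ i, x i * y i

/-- Euclidean Fourier transform `𝓕f(ξ) = ∫ f(y) e^{-2πi y·ξ} dy`. -/
def FT {n : ℕ} (f : (Fin n → ℝ) → ℂ) (ξ : Fin n → ℝ) : ℂ :=
  ∫ y, f y * expi (-(dotp y ξ))

/-- Bargmann-type transform `B_a[f](x,ξ) = ∫ f(y) a(y-x) e^{-2πi y·ξ} dy`. -/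
def Barg {n : ℕ} (a f : (Fin n → ℝ) → ℂ) (x ξ : Fin n → ℝ) : ℂ :=
  ∫ y, f y * a (y - x) * expi (-(dotp y ξ))

/-- Wick quantization with window `a`. -/
def WickOp {n : ℕ} (a : (Fin n → ℝ) → ℂ) (σ : (Fin n → ℝ) → (Fin n → ℝ) → ℂ)
    (f : (Fin n → ℝ) → ℂ) (y : Fin n → ℝ) : ℂ :=
  ∫ p : (Fin n → ℝ) × (Fin n → ℝ),
    σ p.1 p.2 * Barg a f p.1 p.2 * (starRingEnd ℂ) (a (y - p.1)) * expi (dotp y p.2)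

/-- Kohn–Nirenberg quantization. -/
def OpKN {n : ℕ} (σ : (Fin n → ℝ) → (Fin n → ℝ) → ℂ) (f : (Fin n → ℝ) → ℂ)
    (x : Fin n → ℝ) : ℂ :=
  ∫ ξ, expi (dotp x ξ) * σ x ξ * FT f ξ

/-- Partial derivative in the `i`-th coordinate direction. -/
def pd {n : ℕ} (i : Fin n) (F : (Fin n → ℝ) → ℂ) : (Fin n → ℝ) → ℂ :=
  fun x => fderiv ℝ F x (Pi.single i 1)

/-- Multi-index derivative `∂^α`. -/
def md {n : ℕ} (α : Fin n → ℕ) (F : (Fin n → ℝ) → ℂ) : (Fin n → ℝ) → ℂ :=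
  (((List.finRange n).map fun i => (pd i)^[α i]).foldr (· ∘ ·) id) F

/-- Mixed derivative `∂_x^β ∂_ξ^α σ`. -/
def mixedD {n : ℕ} (β α : Fin n → ℕ) (σ : (Fin n → ℝ) → (Fin n → ℝ) → ℂ) :
    (Fin n → ℝ) → (Fin n → ℝ) → ℂ :=
  fun x ξ => md β (fun x' => md α (fun ξ' => σ x' ξ') ξ) x

/-- The weight `1 + |ξ|²` (Euclidean norm squared). -/
def wt {n : ℕ} (ξ : Fin n → ℝ) : ℝ := 1 + ∑ i, ξ i ^ 2

/-- Length `|α|` of a multi-index, as a real number. -/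
def mOrd {n : ℕ} (α : Fin n → ℕ) : ℝ := ∑ i, (α i : ℝ)

/-- The Hörmander class `S^m_{ρ,δ}(ℝⁿ)`. -/
def SymbolClass {n : ℕ} (m ρ δ : ℝ) (σ : (Fin n → ℝ) → (Fin n → ℝ) → ℂ) : Prop :=
  (ContDiff ℝ (⊤ : ℕ∞) fun p : (Fin n → ℝ) × (Fin n → ℝ) => σ p.1 p.2) ∧
  ∀ α β : Fin n → ℕ, ∃ C > 0, ∀ x ξ,
    ‖mixedD β α σ x ξ‖ ≤ C * wt ξ ^ ((m - ρ * mOrd α + δ * mOrd β) / 2)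

/-- The seminorm `‖σ‖_{S^m_{ρ,δ},α,β}`. -/
def hSem {n : ℕ} (m ρ δ : ℝ) (α β : Fin n → ℕ)
    (σ : (Fin n → ℝ) → (Fin n → ℝ) → ℂ) : ℝ :=
  ⨆ p : (Fin n → ℝ) × (Fin n → ℝ),
    wt p.2 ^ (-(m - ρ * mOrd α + δ * mOrd β) / 2) * ‖mixedD β α σ p.1 p.2‖

/-- Squared Sobolev norm `‖f‖²_{H^s}`. -/
def sobSq {n : ℕ} (s : ℝ) (f : (Fin n → ℝ) → ℂ) : ℝ :=
  ∫ ξ, wt ξ ^ s * ‖FT f ξ‖ ^ 2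

end

/-! ### Joint derivatives -/

section Joint

variable {n : ℕ}

/-- coordinate vectors of the phase space -/
def bvec (b : Fin n ⊕ Fin n) : (Fin n → ℝ) × (Fin n → ℝ) :=
  Sum.elim (fun i => (Pi.single i 1, 0)) (fun i => (0, Pi.single i 1)) b

/-- coordinate forms -/
noncomputable def bdual (b : Fin n ⊕ Fin n) : ((Fin n → ℝ) × (Fin n → ℝ)) →L[ℝ] ℝ :=
  Sum.elim
    (fun i => (ContinuousLinearMap.proj (R := ℝ) (φ := fun _ : Fin n => ℝ) i).comp
      (ContinuousLinearMap.fst ℝ (Fin n → ℝ) (Fin n → ℝ)))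
    (fun i => (ContinuousLinearMap.proj (R := ℝ) (φ := fun _ : Fin n => ℝ) i).comp
      (ContinuousLinearMap.snd ℝ (Fin n → ℝ) (Fin n → ℝ))) b

/-- joint directional derivative -/
noncomputable def jd (b : Fin n ⊕ Fin n) (F : (Fin n → ℝ) × (Fin n → ℝ) → ℂ) :
    (Fin n → ℝ) × (Fin n → ℝ) → ℂ := fun p => fderiv ℝ F p (bvec b)

/-- iterated joint derivative -/
noncomputable def jD (l : List (Fin n ⊕ Fin n)) (F : (Fin n → ℝ) × (Fin n → ℝ) → ℂ) :
    (Fin n → ℝ) × (Fin n → ℝ) → ℂ := l.foldr jd F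

lemma jD_cons (b : Fin n ⊕ Fin n) (l) (F : (Fin n → ℝ) × (Fin n → ℝ) → ℂ) :
    jD (b :: l) F = jd b (jD l F) := rfl

lemma jD_append (l l') (F : (Fin n → ℝ) × (Fin n → ℝ) → ℂ) :
    jD (l ++ l') F = jD l (jD l' F) := by simp [jD, List.foldr_append]

lemma bvec_sum (v : (Fin n → ℝ) × (Fin n → ℝ)) :
    v = ∑ b, bdual b v • bvec b := by
  rw [Fintype.sum_sum_type]
  ext j
  · simp [bdual, bvec, Prod.fst_sum, Finset.sum_apply, Pi.single_apply]
  · simp [bdual, bvec, Prod.snd_sum, Finset.sum_apply, Pi.single_apply]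

lemma fderiv_eq_sum (F : (Fin n → ℝ) × (Fin n → ℝ) → ℂ) (p) :
    fderiv ℝ F p = ∑ b, (bdual b).smulRight (jd b F p) := by
  refine ContinuousLinearMap.ext fun v => ?_
  conv_lhs => rw [bvec_sum v]
  simp [jd]

lemma jd_smooth (b : Fin n ⊕ Fin n) {F : (Fin n → ℝ) × (Fin n → ℝ) → ℂ}
    (hF : ContDiff ℝ (⊤ : ℕ∞) F) : ContDiff ℝ (⊤ : ℕ∞) (jd b F) := by
  unfold jd
  exact (hF.fderiv_right (m := (⊤ : ℕ∞)) (by simp)).clm_apply contDiff_const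

lemma jD_smooth (l : List (Fin n ⊕ Fin n)) {F : (Fin n → ℝ) × (Fin n → ℝ) → ℂ}
    (hF : ContDiff ℝ (⊤ : ℕ∞) F) : ContDiff ℝ (⊤ : ℕ∞) (jD l F) := by
  induction l with
  | nil => exact hF
  | cons b l ih => exact jd_smooth b ih

lemma jd_comm (b c : Fin n ⊕ Fin n) {F : (Fin n → ℝ) × (Fin n → ℝ) → ℂ}
    (hF : ContDiff ℝ (⊤ : ℕ∞) F) : jd b (jd c F) = jd c (jd b F) := by
  have h1 : ContDiff ℝ (⊤ : ℕ∞) (fderiv ℝ F) := hF.fderiv_right (m := (⊤ : ℕ∞)) (by simp)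
  have hd : Differentiable ℝ (fderiv ℝ F) := h1.differentiable (by simp)
  funext p
  have key : ∀ v w : (Fin n → ℝ) × (Fin n → ℝ),
      fderiv ℝ (fun p => fderiv ℝ F p v) p w = fderiv ℝ (fderiv ℝ F) p w v := by
    intro v w
    rw [fderiv_clm_apply (hd p) (differentiableAt_const v)]
    simp
  unfold jd
  rw [key, key]
  have hs : IsSymmSndFDerivAt ℝ F p :=
    (hF.contDiffAt).isSymmSndFDerivAt (by simpa using WithTop.coe_le_coe.2 (le_top : (2 : ℕ∞) ≤ ⊤))
  exact hs.eq _ _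

lemma jD_perm {l l' : List (Fin n ⊕ Fin n)} (h : l.Perm l')
    {F : (Fin n → ℝ) × (Fin n → ℝ) → ℂ}
    (hF : ContDiff ℝ (⊤ : ℕ∞) F) : jD l F = jD l' F := by
  induction h with
  | nil => rfl
  | cons x _ ih => rw [jD_cons, jD_cons, ih]
  | swap x y l => simp only [jD_cons]; exact jd_comm _ _ (jD_smooth l hF)
  | trans _ _ h1 h2 => exact h1.trans h2

lemma pd_slice (g : (Fin n → ℝ) → (Fin n → ℝ) × (Fin n → ℝ))
    (A : (Fin n → ℝ) →L[ℝ] (Fin n → ℝ) × (Fin n → ℝ)) (hg : ∀ x, HasFDerivAt g A x)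
    (c : Fin n → Fin n ⊕ Fin n) (hA : ∀ i, A (Pi.single i 1) = bvec (c i))
    {F : (Fin n → ℝ) × (Fin n → ℝ) → ℂ} (hF : ContDiff ℝ (⊤ : ℕ∞) F) (i : Fin n) :
    pd i (fun x => F (g x)) = fun x => jd (c i) F (g x) := by
  funext x
  have h := ((hF.differentiable (by simp) (g x)).hasFDerivAt).comp x (hg x)
  have h' : fderiv ℝ (fun x => F (g x)) x = (fderiv ℝ F (g x)).comp A := h.fderiv
  simp only [pd, jd]
  rw [h']
  simp [hA]

lemma md_slice (g : (Fin n → ℝ) → (Fin n → ℝ) × (Fin n → ℝ))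
    (A : (Fin n → ℝ) →L[ℝ] (Fin n → ℝ) × (Fin n → ℝ)) (hg : ∀ x, HasFDerivAt g A x)
    (c : Fin n → Fin n ⊕ Fin n) (hA : ∀ i, A (Pi.single i 1) = bvec (c i))
    {F : (Fin n → ℝ) × (Fin n → ℝ) → ℂ} (hF : ContDiff ℝ (⊤ : ℕ∞) F) (α : Fin n → ℕ) :
    md α (fun x => F (g x)) = fun x =>
      jD ((List.finRange n).flatMap fun i => List.replicate (α i) (c i)) F (g x) := by
  unfold md
  induction (List.finRange n) with
  | nil => simp [jD]
  | cons i L ih =>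
    simp only [List.map_cons, List.foldr_cons, Function.comp_apply, List.flatMap_cons]
    rw [ih]
    rw [jD_append]
    generalize hG : jD (L.flatMap fun i => List.replicate (α i) (c i)) F = G
    have hGs : ContDiff ℝ (⊤ : ℕ∞) G := hG ▸ jD_smooth _ hF
    induction (α i) with
    | zero => simp [jD]
    | succ k ihk =>
      rw [Function.iterate_succ_apply', ihk, List.replicate_succ, jD_cons]
      exact pd_slice g A hg c hA (jD_smooth _ hGs) i

/-- list attached to multi-indices -/
def mlist (β α : Fin n → ℕ) : List (Fin n ⊕ Fin n) :=
  ((List.finRange n).flatMap fun i => List.replicate (β i) (Sum.inl i)) ++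
  ((List.finRange n).flatMap fun i => List.replicate (α i) (Sum.inr i))

lemma mixedD_eq (β α : Fin n → ℕ) (σ : (Fin n → ℝ) → (Fin n → ℝ) → ℂ)
    (hσ : ContDiff ℝ (⊤ : ℕ∞) fun p : (Fin n → ℝ) × (Fin n → ℝ) => σ p.1 p.2) (x ξ) :
    mixedD β α σ x ξ = jD (mlist β α) (fun p => σ p.1 p.2) (x, ξ) := by
  unfold mixedD mlist
  rw [jD_append]
  have h1 : ∀ x', md α (fun ξ' => σ x' ξ') = fun ξ' =>
      jD ((List.finRange n).flatMap fun i => List.replicate (α i) (Sum.inr i))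
        (fun p => σ p.1 p.2) (x', ξ') := by
    intro x'
    exact md_slice (fun ξ' => (x', ξ')) (ContinuousLinearMap.inr ℝ _ _)
      (fun ξ' => hasFDerivAt_prodMk_right x' ξ') Sum.inr (fun i => by simp [bvec]) hσ α
  simp only [h1]
  have h2 := md_slice (fun x' : Fin n → ℝ => (x', ξ)) (ContinuousLinearMap.inl ℝ _ _)
      (fun x' => hasFDerivAt_prodMk_left x' ξ) Sum.inl (fun i => by simp [bvec])
      (jD_smooth ((List.finRange n).flatMap fun i => List.replicate (α i) (Sum.inr i)) hσ) β
  rw [h2]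

/-- number of position derivatives -/
def nl (l : List (Fin n ⊕ Fin n)) : ℕ := l.countP Sum.isLeft
/-- number of frequency derivatives -/
def nr (l : List (Fin n ⊕ Fin n)) : ℕ := l.countP Sum.isRight

instance lawfulSum : LawfulBEq (Fin n ⊕ Fin n) where
  eq_of_beq {a b} h := by
    rcases a with a | a <;> rcases b with b | b
    · exact congrArg _ (eq_of_beq (α := Fin n) h)
    · exact absurd h (by intro h; cases h)
    · exact absurd h (by intro h; cases h)
    · exact congrArg _ (eq_of_beq (α := Fin n) h)
  rfl {a} := by
    rcases a with a | a
    · exact (beq_self_eq_true (α := Fin n) a)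
    · exact (beq_self_eq_true (α := Fin n) a)

lemma count_mlist (β α : Fin n → ℕ) (b) :
    (mlist β α).count b = Sum.elim β α b := by
  have aux : ∀ (γ : Fin n → ℕ) (c : Fin n → Fin n ⊕ Fin n),
      (((List.finRange n).flatMap fun i => List.replicate (γ i) (c i))).count b
        = ∑ i, if c i = b then γ i else 0 := by
    intro γ c
    rw [List.count_flatMap]
    rw [← List.sum_ofFn, List.ofFn_eq_map]
    congr 1
    apply List.map_congr_left
    intro i _
    simp [List.count_replicate]
  unfold mlist
  rw [List.count_append, aux, aux]
  rcases b with i | i <;> simp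

lemma exists_mlist (l : List (Fin n ⊕ Fin n)) : ∃ β α : Fin n → ℕ, l.Perm (mlist β α) := by
  refine ⟨fun i => l.count (Sum.inl i), fun i => l.count (Sum.inr i), ?_⟩
  rw [List.perm_iff_count]
  intro b
  rw [count_mlist]
  rcases b with i | i <;> rfl

lemma nl_mlist (β α : Fin n → ℕ) : (nl (mlist β α) : ℝ) = mOrd β := by
  have : nl (mlist β α) = ∑ i, β i := by
    unfold nl mlist
    rw [List.countP_append, List.countP_flatMap, List.countP_flatMap]
    rw [← List.sum_ofFn, List.ofFn_eq_map]
    simp [Function.comp_def, List.countP_replicate]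
  rw [this]; simp [mOrd]

lemma nr_mlist (β α : Fin n → ℕ) : (nr (mlist β α) : ℝ) = mOrd α := by
  have : nr (mlist β α) = ∑ i, α i := by
    unfold nr mlist
    rw [List.countP_append, List.countP_flatMap, List.countP_flatMap]
    rw [← List.sum_ofFn, List.ofFn_eq_map]
    simp [Function.comp_def, List.countP_replicate]
  rw [this]; simp [mOrd]

lemma symbolClass_iff (m ρ δ : ℝ) (σ : (Fin n → ℝ) → (Fin n → ℝ) → ℂ) :
    SymbolClass m ρ δ σ ↔
    (ContDiff ℝ (⊤ : ℕ∞) fun p : (Fin n → ℝ) × (Fin n → ℝ) => σ p.1 p.2) ∧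
    ∀ l : List (Fin n ⊕ Fin n), ∃ C > 0, ∀ p : (Fin n → ℝ) × (Fin n → ℝ),
      ‖jD l (fun p => σ p.1 p.2) p‖ ≤ C * wt p.2 ^ ((m - ρ * nr l + δ * nl l) / 2) := by
  unfold SymbolClass
  refine and_congr_right fun hs => ⟨fun h l => ?_, fun h α β => ?_⟩
  · obtain ⟨β, α, hp⟩ := exists_mlist l
    obtain ⟨C, hC, hb⟩ := h α β
    refine ⟨C, hC, fun p => ?_⟩
    have := hb p.1 p.2
    rw [mixedD_eq β α σ hs] at this
    rw [jD_perm hp hs]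
    have e1 : nr l = nr (mlist β α) := hp.countP_eq _
    have e2 : nl l = nl (mlist β α) := hp.countP_eq _
    rw [e1, e2, nl_mlist, nr_mlist]
    exact this
  · obtain ⟨C, hC, hb⟩ := h (mlist β α)
    refine ⟨C, hC, fun x ξ => ?_⟩
    have := hb (x, ξ)
    rw [nl_mlist, nr_mlist] at this
    rw [mixedD_eq β α σ hs]
    exact this

end Joint

/-! ### Weights and averaging operators -/

section Avg

variable {n : ℕ}

lemma one_le_wt (ξ : Fin n → ℝ) : 1 ≤ wt ξ := by
  unfold wt
  have : 0 ≤ ∑ i, ξ i ^ 2 := Finset.sum_nonneg fun i _ => sq_nonneg _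
  linarith

lemma wt_pos (ξ : Fin n → ℝ) : 0 < wt ξ := lt_of_lt_of_le one_pos (one_le_wt ξ)

lemma wt_continuous : Continuous (wt : (Fin n → ℝ) → ℝ) := by
  unfold wt; fun_prop

lemma wt_neg (ξ : Fin n → ℝ) : wt (-ξ) = wt ξ := by simp [wt]

lemma wt_smul_le (c : ℝ) (hc : |c| ≤ 1) (ξ : Fin n → ℝ) : wt (c • ξ) ≤ wt ξ := by
  unfold wt
  have : ∑ i, (c • ξ) i ^ 2 ≤ ∑ i, ξ i ^ 2 := by
    refine Finset.sum_le_sum fun i _ => ?_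
    have h : c ^ 2 ≤ 1 := by rw [← sq_abs]; nlinarith [abs_nonneg c]
    simp only [Pi.smul_apply, smul_eq_mul, mul_pow]
    nlinarith [sq_nonneg (ξ i)]
  linarith

lemma wt_add_le (ξ ζ : Fin n → ℝ) : wt (ξ + ζ) ≤ 2 * wt ξ * wt ζ := by
  unfold wt
  have h : ∑ i, (ξ + ζ) i ^ 2 ≤ 2 * ∑ i, ξ i ^ 2 + 2 * ∑ i, ζ i ^ 2 := by
    rw [Finset.mul_sum, Finset.mul_sum, ← Finset.sum_add_distrib]
    refine Finset.sum_le_sum fun i _ => ?_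
    simp only [Pi.add_apply]
    nlinarith [sq_nonneg (ξ i - ζ i)]
  have h1 : 0 ≤ ∑ i, ξ i ^ 2 := Finset.sum_nonneg fun i _ => sq_nonneg _
  have h2 : 0 ≤ ∑ i, ζ i ^ 2 := Finset.sum_nonneg fun i _ => sq_nonneg _
  nlinarith [mul_nonneg h1 h2]

lemma abs_le_wt (ξ : Fin n → ℝ) (i : Fin n) : |ξ i| ≤ wt ξ := by
  unfold wt
  have : ξ i ^ 2 ≤ ∑ i, ξ i ^ 2 :=
    Finset.single_le_sum (f := fun i => ξ i ^ 2) (fun i _ => sq_nonneg _) (Finset.mem_univ i)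
  rw [← sq_abs] at this
  nlinarith [sq_nonneg (|ξ i| - 1), abs_nonneg (ξ i)]

lemma wt_rpow_le_pow (ξ : Fin n → ℝ) (s : ℝ) (N : ℕ) (h : s ≤ N) : wt ξ ^ s ≤ wt ξ ^ N := by
  rw [← Real.rpow_natCast]
  exact Real.rpow_le_rpow_of_exponent_le (one_le_wt ξ) h

lemma peetre (s : ℝ) (ξ ζ : Fin n → ℝ) :
    wt (ξ + ζ) ^ s ≤ 2 ^ |s| * wt ξ ^ s * wt ζ ^ |s| := by
  have p1 := wt_pos ξ
  have p2 := wt_pos ζ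
  have p3 := wt_pos (ξ + ζ)
  rcases le_total 0 s with hs | hs
  · rw [abs_of_nonneg hs, ← Real.mul_rpow (by norm_num) p1.le,
      ← Real.mul_rpow (by positivity) p2.le]
    exact Real.rpow_le_rpow p3.le (wt_add_le ξ ζ) hs
  · have h : wt ξ ≤ 2 * wt (ξ + ζ) * wt ζ := by
      have := wt_add_le (ξ + ζ) (-ζ)
      rwa [wt_neg, add_neg_cancel_right] at this
    have h1 : (2 * wt (ξ + ζ) * wt ζ) ^ s ≤ wt ξ ^ s :=
      Real.rpow_le_rpow_of_nonpos p1 h hs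
    rw [Real.mul_rpow (by positivity) p2.le, Real.mul_rpow (by norm_num) p3.le] at h1
    rw [abs_of_nonpos hs, Real.rpow_neg (by norm_num), Real.rpow_neg p2.le]
    have q1 : (0:ℝ) < 2 ^ s := by positivity
    have q2 : 0 < wt ζ ^ s := by positivity
    rw [mul_comm ((2:ℝ) ^ s)⁻¹, mul_assoc, ← mul_inv, ← div_eq_mul_inv, le_div_iff₀ (by positivity)]
    linarith

/-- smooth functions with polynomially bounded derivatives -/
def PB (F : (Fin n → ℝ) × (Fin n → ℝ) → ℂ) : Prop :=
  ContDiff ℝ (⊤ : ℕ∞) F ∧ ∀ l : List (Fin n ⊕ Fin n), ∃ C : ℝ, ∃ N : ℕ, 0 ≤ C ∧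
    ∀ p, ‖jD l F p‖ ≤ C * wt p.2 ^ N

lemma PB.jd {F : (Fin n → ℝ) × (Fin n → ℝ) → ℂ} (hF : PB F) (b) : PB (jd b F) := by
  refine ⟨jd_smooth b hF.1, fun l => ?_⟩
  have := hF.2 (l ++ [b])
  rw [jD_append] at this
  exact this

lemma PB.jD {F : (Fin n → ℝ) × (Fin n → ℝ) → ℂ} (hF : PB F) (l) : PB (jD l F) := by
  induction l with
  | nil => exact hF
  | cons b l ih => exact ih.jd b

/-- kernels -/
def KB (K : (Fin n → ℝ) × (Fin n → ℝ) → ℂ) : Prop :=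
  Continuous K ∧ ∀ N : ℕ, Integrable (fun q => wt q.2 ^ N * ‖K q‖)

/-- the averaging operator -/
noncomputable def TT (K : (Fin n → ℝ) × (Fin n → ℝ) → ℂ) (c : ℝ)
    (F : (Fin n → ℝ) × (Fin n → ℝ) → ℂ) (p : (Fin n → ℝ) × (Fin n → ℝ)) : ℂ :=
  ∫ q, K q * F (p + (q.1, c • q.2))

lemma wt_shift (c : ℝ) (hc : |c| ≤ 1) (N : ℕ) (p q : (Fin n → ℝ) × (Fin n → ℝ)) :
    wt (p + (q.1, c • q.2)).2 ^ N ≤ (2 * wt p.2) ^ N * wt q.2 ^ N := by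
  rw [← mul_pow]
  refine pow_le_pow_left₀ (wt_pos _).le ?_ _
  refine (wt_add_le p.2 (c • q.2)).trans ?_
  have := wt_smul_le c hc q.2
  have := wt_pos p.2
  gcongr

lemma TT_integrable {K : (Fin n → ℝ) × (Fin n → ℝ) → ℂ} (hK : KB K) {c : ℝ} (hc : |c| ≤ 1)
    {F : (Fin n → ℝ) × (Fin n → ℝ) → ℂ} (hF : PB F) (p) :
    Integrable (fun q => K q * F (p + (q.1, c • q.2))) := by
  obtain ⟨C, N, hC, hb⟩ := hF.2 []
  have hKc := hK.1
  have hFc := hF.1.continuous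
  refine ((hK.2 N).const_mul (C * (2 * wt p.2) ^ N)).mono' ?_ ?_
  · exact (by fun_prop : Continuous _).aestronglyMeasurable
  · refine Filter.Eventually.of_forall fun q => ?_
    rw [norm_mul]
    have h1 := (hb (p + (q.1, c • q.2))).trans
      (mul_le_mul_of_nonneg_left (wt_shift c hc N p q) hC)
    have h1' : ‖F (p + (q.1, c • q.2))‖ ≤ _ := h1
    calc _ ≤ ‖K q‖ * (C * ((2 * wt p.2) ^ N * wt q.2 ^ N)) := by gcongr
      _ = _ := by ring

lemma fderiv_bound {F : (Fin n → ℝ) × (Fin n → ℝ) → ℂ} (hF : PB F) :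
    ∃ C : ℝ, ∃ N : ℕ, 0 ≤ C ∧ ∀ p, ‖fderiv ℝ F p‖ ≤ C * wt p.2 ^ N := by
  choose C N hC hb using fun b => hF.2 [b]
  refine ⟨∑ b, ‖bdual b‖ * C b, ∑ b, N b, Finset.sum_nonneg fun b _ =>
    mul_nonneg (norm_nonneg _) (hC b), fun p => ?_⟩
  rw [fderiv_eq_sum, Finset.sum_mul]
  refine (norm_sum_le _ _).trans (Finset.sum_le_sum fun b _ => ?_)
  rw [ContinuousLinearMap.norm_smulRight_apply, mul_assoc]
  refine mul_le_mul_of_nonneg_left ((hb b p).trans ?_) (norm_nonneg _)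
  refine mul_le_mul_of_nonneg_left ?_ (hC b)
  exact pow_le_pow_right₀ (one_le_wt _) (Finset.single_le_sum (fun _ _ => Nat.zero_le _)
    (Finset.mem_univ b))

lemma TT_hasFDerivAt {K : (Fin n → ℝ) × (Fin n → ℝ) → ℂ} (hK : KB K) {c : ℝ} (hc : |c| ≤ 1)
    {F : (Fin n → ℝ) × (Fin n → ℝ) → ℂ} (hF : PB F) (p) :
    HasFDerivAt (TT K c F) (∑ b, (bdual b).smulRight (TT K c (jd b F) p)) p := by
  obtain ⟨C, N, hC, hb⟩ := fderiv_bound hF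
  have hKc := hK.1
  have hFc := hF.1.continuous
  have hF'c : Continuous (fderiv ℝ F) := hF.1.continuous_fderiv (by simp)
  -- local bound of the weight
  obtain ⟨R, hR⟩ : ∃ R, ∀ p' ∈ Metric.closedBall p 1, wt p'.2 ≤ R := by
    obtain ⟨R, hR⟩ := ((isCompact_closedBall p 1).image
      (wt_continuous.comp continuous_snd)).bddAbove
    exact ⟨R, fun p' hp' => hR ⟨p', hp', rfl⟩⟩
  have main := hasFDerivAt_integral_of_dominated_of_fderiv_le (𝕜 := ℝ) (μ := volume)
    (F := fun p' q => K q * F (p' + (q.1, c • q.2)))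
    (F' := fun p' q => K q • fderiv ℝ F (p' + (q.1, c • q.2)))
    (bound := fun q => (C * (2 * R) ^ N) * (wt q.2 ^ N * ‖K q‖))
    (x₀ := p) (s := Metric.closedBall p 1) (Metric.closedBall_mem_nhds p one_pos)
    (Filter.Eventually.of_forall fun p' => (TT_integrable hK hc hF p').1)
    (TT_integrable hK hc hF p)
    (by exact (by fun_prop : Continuous _).aestronglyMeasurable)
    (Filter.Eventually.of_forall fun q p' hp' => by
      rw [norm_smul]
      have h1 := (hb (p' + (q.1, c • q.2))).trans
        (mul_le_mul_of_nonneg_left (wt_shift c hc N p' q) hC)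
      have h2 := hR p' hp'
      have h3 := wt_pos p'.2
      have h4 := wt_pos q.2
      calc _ ≤ ‖K q‖ * (C * ((2 * wt p'.2) ^ N * wt q.2 ^ N)) := by gcongr
        _ ≤ ‖K q‖ * (C * ((2 * R) ^ N * wt q.2 ^ N)) := by gcongr
        _ = _ := by ring)
    ((hK.2 N).const_mul _)
    (Filter.Eventually.of_forall fun q p' _ => by
      have h1 : HasFDerivAt F (fderiv ℝ F (p' + (q.1, c • q.2))) (p' + (q.1, c • q.2)) :=
        (hF.1.differentiable (by simp) _).hasFDerivAt
      have h2 := h1.comp p' ((hasFDerivAt_id p').add_const (q.1, c • q.2))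
      simpa using h2.const_mul (K q))
  have e : (∫ q, K q • fderiv ℝ F (p + (q.1, c • q.2)))
      = ∑ b, (bdual b).smulRight (TT K c (jd b F) p) := by
    have e1 : ∀ q : (Fin n → ℝ) × (Fin n → ℝ), K q • fderiv ℝ F (p + (q.1, c • q.2))
        = ∑ b, ContinuousLinearMap.smulRightL ℝ _ ℂ (bdual b)
            (K q * jd b F (p + (q.1, c • q.2))) := by
      intro q
      rw [fderiv_eq_sum, Finset.smul_sum]
      refine Finset.sum_congr rfl fun b _ => ?_
      refine ContinuousLinearMap.ext fun v => ?_
      simp only [_root_.smul_apply, ContinuousLinearMap.smulRight_apply,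
        ContinuousLinearMap.smulRightL_apply_apply, smul_eq_mul, Complex.real_smul]
      ring
    simp_rw [e1]
    rw [integral_finsetSum]
    · refine Finset.sum_congr rfl fun b _ => ?_
      rw [ContinuousLinearMap.integral_comp_comm _ (TT_integrable hK hc (hF.jd b) p)]
      rfl
    · intro b _
      exact ContinuousLinearMap.integrable_comp _ (TT_integrable hK hc (hF.jd b) p)
  rw [e] at main
  exact main

lemma bdual_bvec (b c : Fin n ⊕ Fin n) : bdual b (bvec c) = if b = c then 1 else 0 := by
  rcases b with i | i <;> rcases c with j | j <;> simp [bdual, bvec, Pi.single_apply]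

lemma jd_TT {K : (Fin n → ℝ) × (Fin n → ℝ) → ℂ} (hK : KB K) {c : ℝ} (hc : |c| ≤ 1)
    {F : (Fin n → ℝ) × (Fin n → ℝ) → ℂ} (hF : PB F) (b) :
    jd b (TT K c F) = TT K c (jd b F) := by
  funext p
  rw [jd, (TT_hasFDerivAt hK hc hF p).fderiv]
  rcases b with b | b <;> simp [bdual_bvec]

lemma jD_TT {K : (Fin n → ℝ) × (Fin n → ℝ) → ℂ} (hK : KB K) {c : ℝ} (hc : |c| ≤ 1)
    {F : (Fin n → ℝ) × (Fin n → ℝ) → ℂ} (hF : PB F) (l) :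
    jD l (TT K c F) = TT K c (jD l F) := by
  induction l with
  | nil => rfl
  | cons b l ih => rw [jD_cons, ih, jd_TT hK hc (hF.jD l), jD_cons]

lemma TT_smooth {K : (Fin n → ℝ) × (Fin n → ℝ) → ℂ} (hK : KB K) {c : ℝ} (hc : |c| ≤ 1)
    {F : (Fin n → ℝ) × (Fin n → ℝ) → ℂ} (hF : PB F) :
    ContDiff ℝ (⊤ : ℕ∞) (TT K c F) := by
  rw [contDiff_infty]
  intro k
  induction k generalizing F with
  | zero =>
    rw [Nat.cast_zero, contDiff_zero]
    exact continuous_iff_continuousAt.2 fun p => (TT_hasFDerivAt hK hc hF p).continuousAt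
  | succ k ih =>
    rw [Nat.cast_add, Nat.cast_one, contDiff_succ_iff_fderiv]
    refine ⟨fun p => (TT_hasFDerivAt hK hc hF p).differentiableAt, by simp, ?_⟩
    have : fderiv ℝ (TT K c F) = fun p => ∑ b,
        ContinuousLinearMap.smulRightL ℝ _ ℂ (bdual b) (TT K c (jd b F) p) := by
      funext p
      exact (TT_hasFDerivAt hK hc hF p).fderiv
    rw [this]
    refine ContDiff.sum fun b _ => ?_
    exact (ContinuousLinearMap.contDiff _).comp (ih (hF.jd b))

lemma jd_sub (b : Fin n ⊕ Fin n) {F G : (Fin n → ℝ) × (Fin n → ℝ) → ℂ}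
    (hF : ContDiff ℝ (⊤ : ℕ∞) F) (hG : ContDiff ℝ (⊤ : ℕ∞) G) :
    jd b (fun p => F p - G p) = fun p => jd b F p - jd b G p := by
  funext p
  unfold jd
  rw [fderiv_fun_sub (hF.differentiable (by simp) p) (hG.differentiable (by simp) p)]
  rfl

lemma jD_sub (l : List (Fin n ⊕ Fin n)) {F G : (Fin n → ℝ) × (Fin n → ℝ) → ℂ}
    (hF : ContDiff ℝ (⊤ : ℕ∞) F) (hG : ContDiff ℝ (⊤ : ℕ∞) G) :
    jD l (fun p => F p - G p) = fun p => jD l F p - jD l G p := by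
  induction l with
  | nil => rfl
  | cons b l ih => rw [jD_cons, ih, jd_sub b (jD_smooth l hF) (jD_smooth l hG)]; rfl

lemma PB_of_symbol {m ρ δ : ℝ} {σ : (Fin n → ℝ) → (Fin n → ℝ) → ℂ}
    (hσ : SymbolClass m ρ δ σ) : PB (fun p => σ p.1 p.2) := by
  rw [symbolClass_iff] at hσ
  refine ⟨hσ.1, fun l => ?_⟩
  obtain ⟨C, hC, hb⟩ := hσ.2 l
  refine ⟨C, ⌈(m - ρ * nr l + δ * nl l) / 2⌉₊, hC.le, fun p => (hb p).trans ?_⟩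
  exact mul_le_mul_of_nonneg_left (wt_rpow_le_pow _ _ _ (Nat.le_ceil _)) hC.le

/-- mean value estimate -/
lemma mean_value {G : (Fin n → ℝ) × (Fin n → ℝ) → ℂ} (hG : ContDiff ℝ (⊤ : ℕ∞) G)
    (s : ℝ) (C : Fin n → ℝ) (hC : ∀ i, 0 ≤ C i)
    (hb : ∀ i p, ‖jd (Sum.inr i) G p‖ ≤ C i * wt p.2 ^ s) (x ξ ζ : Fin n → ℝ) :
    ‖G (x, ξ + ζ) - G (x, ξ)‖ ≤
      (∑ i, C i) * 2 ^ |s| * wt ξ ^ s * wt ζ ^ (⌈|s|⌉₊ + 1) := by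
  have hder : ∀ t : ℝ, HasDerivAt (fun t : ℝ => G (x, ξ + t • ζ))
      (fderiv ℝ G (x, ξ + t • ζ) (0, ζ)) t := by
    intro t
    have h1 : HasDerivAt (fun t : ℝ => (x, ξ + t • ζ)) ((0 : Fin n → ℝ), ζ) t := by
      have := ((hasDerivAt_id t).smul_const ζ).const_add ξ
      simpa using (hasDerivAt_const t x).prodMk this
    exact ((hG.differentiable (by simp) (x, ξ + t • ζ)).hasFDerivAt).comp_hasDerivAt t h1
  have := norm_image_sub_le_of_norm_deriv_le_segment_01'
    (f := fun t : ℝ => G (x, ξ + t • ζ)) (f' := fun t => fderiv ℝ G (x, ξ + t • ζ) (0, ζ))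
    (C := (∑ i, C i) * 2 ^ |s| * wt ξ ^ s * wt ζ ^ (⌈|s|⌉₊ + 1))
    (fun t _ => (hder t).hasDerivWithinAt) ?_
  · simpa using this
  · intro t ht
    have e : fderiv ℝ G (x, ξ + t • ζ) (0, ζ)
        = ∑ i, (ζ i : ℂ) * jd (Sum.inr i) G (x, ξ + t • ζ) := by
      rw [fderiv_eq_sum, Fintype.sum_sum_type]
      simp [bdual]
    rw [e, Finset.sum_mul, Finset.sum_mul, Finset.sum_mul]
    refine (norm_sum_le _ _).trans (Finset.sum_le_sum fun i _ => ?_)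
    rw [norm_mul, Complex.norm_real, Real.norm_eq_abs]
    have p1 := wt_pos ξ
    have p2 := wt_pos ζ
    have h1 := hb i (x, ξ + t • ζ)
    have h2 := peetre s ξ (t • ζ)
    have h3 : wt (t • ζ) ^ |s| ≤ wt ζ ^ ⌈|s|⌉₊ :=
      (Real.rpow_le_rpow (wt_pos _).le (wt_smul_le t (by rw [abs_le]; constructor <;> linarith [ht.1, ht.2]) ζ)
        (abs_nonneg s)).trans (wt_rpow_le_pow _ _ _ (Nat.le_ceil _))
    have hCi := hC i
    calc |ζ i| * ‖jd (Sum.inr i) G (x, ξ + t • ζ)‖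
        ≤ wt ζ * (C i * (2 ^ |s| * wt ξ ^ s * wt ζ ^ ⌈|s|⌉₊)) := by
          refine mul_le_mul (abs_le_wt ζ i) (h1.trans ?_) (norm_nonneg _) p2.le
          refine mul_le_mul_of_nonneg_left (h2.trans ?_) hCi
          exact mul_le_mul_of_nonneg_left h3 (by positivity)
      _ = _ := by ring

lemma tau_symbol {K : (Fin n → ℝ) × (Fin n → ℝ) → ℂ} (hK : KB K)
    {m ρ δ : ℝ} (hδ0 : 0 ≤ δ) {σ : (Fin n → ℝ) → (Fin n → ℝ) → ℂ}
    (hσ : SymbolClass m ρ δ σ) :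
    SymbolClass (m - (ρ - δ)) ρ δ (fun x ξ =>
      TT K 1 (fun p => σ p.1 p.2) (x, ξ) - TT K 0 (fun p => σ p.1 p.2) (x, ξ)) := by
  have hPB := PB_of_symbol hσ
  rw [symbolClass_iff] at hσ ⊢
  obtain ⟨hs, hσ⟩ := hσ
  set S : (Fin n → ℝ) × (Fin n → ℝ) → ℂ := fun p => σ p.1 p.2 with hS
  have c1 : |(1:ℝ)| ≤ 1 := by simp
  have c0 : |(0:ℝ)| ≤ 1 := by simp
  have t1 := TT_smooth hK c1 hPB
  have t0 := TT_smooth hK c0 hPB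
  refine ⟨t1.sub t0, fun l => ?_⟩
  have e : jD l (fun p : (Fin n → ℝ) × (Fin n → ℝ) => TT K 1 S (p.1, p.2) - TT K 0 S (p.1, p.2))
      = fun p => TT K 1 (jD l S) p - TT K 0 (jD l S) p := by
    rw [← jD_TT hK c1 hPB, ← jD_TT hK c0 hPB]
    exact jD_sub l t1 t0
  simp only [e]
  set s : ℝ := (m - ρ * (nr l + 1) + δ * nl l) / 2 with hsdef
  choose C hC hb using fun i : Fin n => hσ (Sum.inr i :: l)
  have hb' : ∀ i p, ‖jd (Sum.inr i) (jD l S) p‖ ≤ C i * wt p.2 ^ s := by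
    intro i p
    have := hb i p
    have e1 : nr ((Sum.inr i : Fin n ⊕ Fin n) :: l) = nr l + 1 := List.countP_cons_of_pos rfl
    have e2 : nl ((Sum.inr i : Fin n ⊕ Fin n) :: l) = nl l := List.countP_cons_of_neg (by simp)
    rw [e1, e2] at this
    push_cast at this
    exact this
  have mv := mean_value (jD_smooth l hs) s C (fun i => (hC i).le) hb'
  set M := ⌈|s|⌉₊ + 1
  set A : ℝ := (∑ i, C i) * 2 ^ |s| with hA
  have hA0 : 0 ≤ A := mul_nonneg (Finset.sum_nonneg fun i _ => (hC i).le) (by positivity)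
  set I : ℝ := ∫ q, wt q.2 ^ M * ‖K q‖ with hI
  have hI0 : 0 ≤ I := integral_nonneg fun q => mul_nonneg (pow_nonneg (wt_pos _).le _) (norm_nonneg _)
  refine ⟨A * I + 1, by positivity, fun p => ?_⟩
  have hp := wt_pos p.2
  have hle : wt p.2 ^ s ≤ wt p.2 ^ ((m - (ρ - δ) - ρ * nr l + δ * nl l) / 2) := by
    refine Real.rpow_le_rpow_of_exponent_le (one_le_wt _) ?_
    rw [hsdef]; linarith
  have hint : TT K 1 (jD l S) p - TT K 0 (jD l S) p =
      ∫ q, K q * (jD l S (p + (q.1, (1:ℝ) • q.2)) - jD l S (p + (q.1, (0:ℝ) • q.2))) := by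
    unfold TT
    rw [← integral_sub (TT_integrable hK c1 (hPB.jD l) p) (TT_integrable hK c0 (hPB.jD l) p)]
    simp_rw [mul_sub]
  rw [hint]
  calc _ ≤ ∫ q : (Fin n → ℝ) × (Fin n → ℝ), (A * wt p.2 ^ s) * (wt q.2 ^ M * ‖K q‖) := by
        refine norm_integral_le_of_norm_le ((hK.2 M).const_mul _)
          (Filter.Eventually.of_forall fun q => ?_)
        rw [norm_mul]
        have h := mv (p.1 + q.1) p.2 q.2
        have e1 : p + (q.1, (1:ℝ) • q.2) = (p.1 + q.1, p.2 + q.2) := by ext <;> simp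
        have e2 : p + (q.1, (0:ℝ) • q.2) = (p.1 + q.1, p.2) := by ext <;> simp
        rw [e1, e2]
        calc _ ≤ ‖K q‖ * (A * wt p.2 ^ s * wt q.2 ^ M) :=
              mul_le_mul_of_nonneg_left h (norm_nonneg _)
          _ = _ := by ring
    _ = A * I * wt p.2 ^ s := by rw [integral_const_mul]; ring
    _ ≤ (A * I + 1) * wt p.2 ^ s := by
        have : 0 < wt p.2 ^ s := by positivity
        nlinarith
    _ ≤ _ := mul_le_mul_of_nonneg_left hle (by positivity)

end Avg

/-! ### Fourier side -/

section Fourier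

variable {n : ℕ}

lemma expi_add (s t : ℝ) : expi (s + t) = expi s * expi t := by
  unfold expi
  rw [← Complex.exp_add]
  push_cast
  ring_nf

lemma norm_expi (t : ℝ) : ‖expi t‖ = 1 := by
  have : expi t = Complex.exp (((2 * Real.pi * t : ℝ) : ℂ) * Complex.I) := by
    unfold expi
    push_cast
    ring_nf
  rw [this, Complex.norm_exp_ofReal_mul_I]

lemma expi_continuous : Continuous expi := by
  unfold expi
  fun_prop

lemma dotp_continuous : Continuous (fun p : (Fin n → ℝ) × (Fin n → ℝ) => dotp p.1 p.2) := by
  unfold dotp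
  fun_prop

lemma dotp_cont {X : Type*} [TopologicalSpace X] {u v : X → Fin n → ℝ}
    (hu : Continuous u) (hv : Continuous v) : Continuous (fun x => expi (dotp (u x) (v x))) :=
  expi_continuous.comp (dotp_continuous.comp (hu.prodMk hv))

lemma dotp_add_left (x y z : Fin n → ℝ) : dotp (x + y) z = dotp x z + dotp y z := by
  simp [dotp, add_mul, Finset.sum_add_distrib]
lemma dotp_add_right (x y z : Fin n → ℝ) : dotp x (y + z) = dotp x y + dotp x z := by
  simp [dotp, mul_add, Finset.sum_add_distrib]
lemma dotp_sub_left (x y z : Fin n → ℝ) : dotp (x - y) z = dotp x z - dotp y z := by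
  simp [dotp, sub_mul, Finset.sum_sub_distrib]
lemma dotp_sub_right (x y z : Fin n → ℝ) : dotp x (y - z) = dotp x y - dotp x z := by
  simp [dotp, mul_sub, Finset.sum_sub_distrib]
lemma dotp_neg_left (x y : Fin n → ℝ) : dotp (-x) y = - dotp x y := by
  simp [dotp]

open scoped FourierTransform in
/-- the Fourier transform as a Schwartz function -/
noncomputable def FTS (a : SchwartzMap (Fin n → ℝ) ℂ) : SchwartzMap (Fin n → ℝ) ℂ :=
  SchwartzMap.compCLMOfContinuousLinearEquiv ℂ (EuclideanSpace.equiv (Fin n) ℝ).symm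
    (𝓕 (SchwartzMap.compCLMOfContinuousLinearEquiv ℂ (EuclideanSpace.equiv (Fin n) ℝ) a))

lemma FTS_apply (a : SchwartzMap (Fin n → ℝ) ℂ) (ξ) : FTS a ξ = FT a ξ := by
  unfold FTS FT
  rw [SchwartzMap.compCLMOfContinuousLinearEquiv_apply, SchwartzMap.fourier_coe,
    Function.comp_apply, Real.fourier_eq',
    ← (PiLp.volume_preserving_toLp (Fin n)).integral_comp
      (MeasurableEquiv.toLp 2 (Fin n → ℝ)).measurableEmbedding]
  refine integral_congr_ae (Filter.Eventually.of_forall fun y => ?_)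
  simp only [SchwartzMap.compCLMOfContinuousLinearEquiv_apply, Function.comp_apply, smul_eq_mul]
  rw [mul_comm]
  congr 1
  unfold expi dotp
  simp [PiLp.inner_apply, mul_comm]
  ring_nf

lemma FTS_inv (a : SchwartzMap (Fin n → ℝ) ℂ) (z) :
    (∫ ζ, FTS a ζ * expi (dotp z ζ)) = a z := by
  set A := SchwartzMap.compCLMOfContinuousLinearEquiv ℂ (EuclideanSpace.equiv (Fin n) ℝ) a
    with hA
  have h := FourierTransform.fourierInv_fourier_eq
    (F := SchwartzMap (EuclideanSpace ℝ (Fin n)) ℂ) A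
  have h2 : A (WithLp.toLp 2 z) = a z := rfl
  rw [← h2]
  conv_rhs => rw [← h]
  rw [SchwartzMap.fourierInv_coe, Real.fourierInv_eq',
    ← (PiLp.volume_preserving_toLp (Fin n)).integral_comp
      (MeasurableEquiv.toLp 2 (Fin n → ℝ)).measurableEmbedding]
  refine integral_congr_ae (Filter.Eventually.of_forall fun y => ?_)
  simp only [FTS, SchwartzMap.compCLMOfContinuousLinearEquiv_apply, Function.comp_apply,
    smul_eq_mul]
  rw [mul_comm]
  congr 1
  unfold expi dotp
  simp [PiLp.inner_apply, mul_comm]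
  ring_nf

lemma integrable_wt_pow (f : SchwartzMap (Fin n → ℝ) ℂ) (N : ℕ) :
    Integrable (fun ξ => wt ξ ^ N * ‖f ξ‖) := by
  have h0 := f.integrable_pow_mul volume 0
  have h1 := f.integrable_pow_mul volume (2 * N)
  refine ((h0.add h1).const_mul ((1 + n) ^ N * 2 ^ (N - 1))).mono' ?_ ?_
  · have := wt_continuous (n := n)
    have := f.continuous
    exact (by fun_prop : Continuous _).aestronglyMeasurable
  · refine Filter.Eventually.of_forall fun ξ => ?_
    have hw : wt ξ ≤ (1 + n) * (1 + ‖ξ‖ ^ 2) := by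
      unfold wt
      have : ∑ i, ξ i ^ 2 ≤ ∑ i : Fin n, ‖ξ‖ ^ 2 := by
        refine Finset.sum_le_sum fun i _ => ?_
        rw [← sq_abs]
        exact pow_le_pow_left₀ (abs_nonneg _) (norm_le_pi_norm ξ i) 2
      simp at this
      nlinarith [sq_nonneg ‖ξ‖, (Nat.cast_nonneg n : (0:ℝ) ≤ n)]
    have hp := wt_pos ξ
    have h2 : wt ξ ^ N ≤ (1 + n) ^ N * 2 ^ (N - 1) * (1 + ‖ξ‖ ^ (2 * N)) := by
      calc wt ξ ^ N ≤ ((1 + n) * (1 + ‖ξ‖ ^ 2)) ^ N := pow_le_pow_left₀ hp.le hw N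
        _ = (1 + n) ^ N * (1 + ‖ξ‖ ^ 2) ^ N := mul_pow _ _ _
        _ ≤ (1 + n) ^ N * (2 ^ (N - 1) * (1 ^ N + (‖ξ‖ ^ 2) ^ N)) := by
          gcongr
          exact add_pow_le zero_le_one (by positivity) N
        _ = _ := by rw [one_pow, ← pow_mul]; ring
    rw [Real.norm_of_nonneg (by positivity)]
    simp only [Pi.add_apply, pow_zero]
    calc _ ≤ (1 + n) ^ N * 2 ^ (N - 1) * (1 + ‖ξ‖ ^ (2 * N)) * ‖f ξ‖ := by gcongr
      _ = _ := by ring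

/-- the kernel -/
noncomputable def KK (a : SchwartzMap (Fin n → ℝ) ℂ) (q : (Fin n → ℝ) × (Fin n → ℝ)) : ℂ :=
  expi (-(dotp q.1 q.2)) * FTS a q.2 * (starRingEnd ℂ) (a (-q.1))

lemma KK_norm (a : SchwartzMap (Fin n → ℝ) ℂ) (q) : ‖KK a q‖ = ‖FTS a q.2‖ * ‖a (-q.1)‖ := by
  simp [KK, norm_expi]

lemma KK_KB (a : SchwartzMap (Fin n → ℝ) ℂ) : KB (KK a) := by
  constructor
  · have h1 := a.continuous
    have h2 := (FTS a).continuous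
    have h3 := expi_continuous
    have h4 := dotp_continuous (n := n)
    unfold KK
    have h5 : Continuous (fun q : (Fin n → ℝ) × (Fin n → ℝ) => expi (-(dotp q.1 q.2))) :=
      h3.comp h4.neg
    have h6 : Continuous (fun q : (Fin n → ℝ) × (Fin n → ℝ) => (starRingEnd ℂ) (a (-q.1))) :=
      Complex.continuous_conj.comp (by fun_prop)
    exact (h5.mul (by fun_prop)).mul h6
  · intro N
    have h1 : Integrable (fun z => ‖a (-z)‖) := (a.integrable (μ := volume)).comp_neg.norm
    have := h1.mul_prod (integrable_wt_pow (FTS a) N)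
    refine this.congr (Filter.Eventually.of_forall fun q => ?_)
    simp only [KK_norm]
    ring

lemma KK_int (a : SchwartzMap (Fin n → ℝ) ℂ) : Integrable (KK a) := by
  have h := (KK_KB a).2 0
  simp only [pow_zero, one_mul] at h
  exact (integrable_norm_iff (KK_KB a).1.aestronglyMeasurable).1 h

lemma symbol_bounded {m ρ δ : ℝ} (hm : m ≤ 0) {σ : (Fin n → ℝ) → (Fin n → ℝ) → ℂ}
    (hσ : SymbolClass m ρ δ σ) : ∃ C, 0 < C ∧ ∀ x ξ, ‖σ x ξ‖ ≤ C := by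
  rw [symbolClass_iff] at hσ
  obtain ⟨C, hC, hb⟩ := hσ.2 []
  refine ⟨C, hC, fun x ξ => ?_⟩
  have := hb (x, ξ)
  simp only [nr, nl, List.countP_nil, Nat.cast_zero, mul_zero, sub_zero, add_zero] at this
  refine this.trans ?_
  have h : wt ξ ^ (m / 2) ≤ 1 := Real.rpow_le_one_of_one_le_of_nonpos (one_le_wt ξ) (by linarith)
  nlinarith

lemma TT_zero (a : SchwartzMap (Fin n → ℝ) ℂ) {σ : (Fin n → ℝ) → (Fin n → ℝ) → ℂ}
    (hPB : PB (fun p => σ p.1 p.2)) (x ξ) :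
    TT (KK a) 0 (fun p => σ p.1 p.2) (x, ξ) =
      ∫ z, ((‖a z‖ ^ 2 : ℝ) : ℂ) * σ (x - z) ξ := by
  have hint := TT_integrable (KK_KB a) (c := 0) (by simp) hPB (x, ξ)
  unfold TT
  rw [Measure.volume_eq_prod] at hint ⊢
  rw [integral_prod _ hint, ← integral_neg_eq_self]
  refine integral_congr_ae (Filter.Eventually.of_forall fun z => ?_)
  simp only [KK, zero_smul, Prod.mk_add_mk, add_zero, neg_neg, dotp_neg_left]
  have : ∀ ζ, expi (dotp z ζ) * FTS a ζ * (starRingEnd ℂ) (a z) * σ (x + -z) ξ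
      = (FTS a ζ * expi (dotp z ζ)) * ((starRingEnd ℂ) (a z) * σ (x - z) ξ) := by
    intro ζ
    rw [← sub_eq_add_neg]
    ring
  simp_rw [this]
  rw [integral_mul_const, FTS_inv, ← mul_assoc, Complex.mul_conj, Complex.normSq_eq_norm_sq]

lemma Barg_eq (a f : SchwartzMap (Fin n → ℝ) ℂ) (x ξ) :
    Barg a f x ξ = ∫ η, FT f η * (expi (dotp x (η - ξ)) * FTS a (ξ - η)) := by
  unfold Barg
  have ha : Integrable (fun w => a (w - x)) := (a.integrable (μ := volume)).comp_sub_right x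
  have hf : Integrable (FTS f) := (FTS f).integrable
  have hac := a.continuous
  have hfc := (FTS f).continuous
  have hint : Integrable (fun q : (Fin n → ℝ) × (Fin n → ℝ) =>
      FTS f q.2 * expi (dotp q.1 q.2) * a (q.1 - x) * expi (dotp (-q.1) ξ))
      (volume.prod volume) := by
    refine (ha.mul_prod hf).norm.mono' ?_ (Filter.Eventually.of_forall fun q => ?_)
    · have h1 := dotp_cont (n := n) (X := (Fin n → ℝ) × (Fin n → ℝ)) continuous_fst continuous_snd
      have h2 := dotp_cont (n := n) (X := (Fin n → ℝ) × (Fin n → ℝ)) continuous_fst.neg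
        (continuous_const (y := ξ))
      exact (by fun_prop : Continuous _).aestronglyMeasurable
    · simp [norm_expi, mul_comm]
  have e1 : ∀ w, f w * a (w - x) * expi (-(dotp w ξ))
      = ∫ η, FTS f η * expi (dotp w η) * a (w - x) * expi (dotp (-w) ξ) := by
    intro w
    rw [integral_mul_const, integral_mul_const, FTS_inv, dotp_neg_left]
  simp_rw [e1]
  rw [integral_integral_swap hint]
  refine integral_congr_ae (Filter.Eventually.of_forall fun η => ?_)
  simp only []
  rw [← FTS_apply f η, FTS_apply a, FT]
  rw [← integral_add_right_eq_self _ x, ← integral_const_mul, ← integral_const_mul]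
  refine integral_congr_ae (Filter.Eventually.of_forall fun u => ?_)
  simp only [add_sub_cancel_right]
  have : expi (dotp (u + x) η) * expi (dotp (-(u + x)) ξ)
      = expi (dotp x (η - ξ)) * expi (-(dotp u (ξ - η))) := by
    rw [← expi_add, ← expi_add]
    congr 1
    simp only [dotp_neg_left, dotp_add_left, dotp_sub_right]
    ring
  linear_combination (FTS f η * a u) * this

instance volRight : (volume : Measure ((Fin n → ℝ) × (Fin n → ℝ))).IsAddRightInvariant := by
  rw [Measure.volume_eq_prod]
  infer_instance

lemma ker_integrable {g : (Fin n → ℝ) → ℂ} (hg : Integrable g) (hgc : Continuous g)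
    {K : (Fin n → ℝ) × (Fin n → ℝ) → ℂ} (hK : Integrable K) (hKc : Continuous K) (y : Fin n → ℝ) :
    Integrable (fun r : (Fin n → ℝ) × ((Fin n → ℝ) × (Fin n → ℝ)) =>
      g r.1 * K (r.2 - (y, r.1))) (volume.prod volume) := by
  have hc : Continuous (fun r : (Fin n → ℝ) × ((Fin n → ℝ) × (Fin n → ℝ)) =>
      g r.1 * K (r.2 - (y, r.1))) := by fun_prop
  rw [integrable_prod_iff hc.aestronglyMeasurable]
  constructor
  · refine Filter.Eventually.of_forall fun η => ?_
    have h1 : Integrable (fun p => K (p - (y, η))) := hK.comp_sub_right (y, η)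
    exact h1.const_mul (g η)
  · have : ∀ η, ∫ p, ‖g η * K (p - (y, η))‖ = ‖g η‖ * ∫ p, ‖K p‖ := by
      intro η
      simp_rw [norm_mul]
      rw [integral_const_mul, integral_sub_right_eq_self (fun p => ‖K p‖)]
    simp_rw [this]
    exact hg.norm.mul_const _

lemma Wick_eq {m ρ δ : ℝ} (hm : m ≤ 0) {σ : (Fin n → ℝ) → (Fin n → ℝ) → ℂ}
    (hσ : SymbolClass m ρ δ σ) (a f : SchwartzMap (Fin n → ℝ) ℂ) (y) :
    WickOp a σ f y =
      ∫ η, expi (dotp y η) * TT (KK a) 1 (fun p => σ p.1 p.2) (y, η) * FT f η := by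
  obtain ⟨C, hC, hb⟩ := symbol_bounded hm hσ
  have hσc : Continuous (fun p : (Fin n → ℝ) × (Fin n → ℝ) => σ p.1 p.2) := hσ.1.continuous
  have hKc := (KK_KB a).1
  have hKi := KK_int a
  have hfi : Integrable (FTS f) := (FTS f).integrable
  have hfc := (FTS f).continuous
  have hker : Integrable (fun r : (Fin n → ℝ) × ((Fin n → ℝ) × (Fin n → ℝ)) =>
      FTS f r.1 * KK a (r.2 - (y, r.1))) (volume.prod volume) :=
    ker_integrable hfi hfc hKi hKc y
  have hint : Integrable (fun r : (Fin n → ℝ) × ((Fin n → ℝ) × (Fin n → ℝ)) =>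
      expi (dotp y r.1) * (FTS f r.1 * KK a (r.2 - (y, r.1))) * σ r.2.1 r.2.2)
      (volume.prod volume) := by
    refine (hker.norm.const_mul C).mono' ?_ (Filter.Eventually.of_forall fun r => ?_)
    · have h1 := dotp_cont (n := n) (X := (Fin n → ℝ) × ((Fin n → ℝ) × (Fin n → ℝ)))
        (continuous_const (y := y)) continuous_fst
      have h2 : Continuous (fun r : (Fin n → ℝ) × ((Fin n → ℝ) × (Fin n → ℝ)) =>
        σ r.2.1 r.2.2) := hσc.comp continuous_snd
      exact (by fun_prop : Continuous _).aestronglyMeasurable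
    · rw [norm_mul, norm_mul, norm_expi, one_mul, mul_comm]
      exact mul_le_mul_of_nonneg_right (hb _ _) (norm_nonneg _)
  have e1 : ∀ η, expi (dotp y η) * TT (KK a) 1 (fun p => σ p.1 p.2) (y, η) * FT f η
      = ∫ p : (Fin n → ℝ) × (Fin n → ℝ),
        expi (dotp y η) * (FTS f η * KK a (p - (y, η))) * σ p.1 p.2 := by
    intro η
    rw [← integral_add_right_eq_self _ (y, η)]
    unfold TT
    rw [← FTS_apply, mul_right_comm, ← integral_const_mul]
    refine integral_congr_ae (Filter.Eventually.of_forall fun q => ?_)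
    simp only [add_sub_cancel_right, one_smul]
    rw [add_comm q]
    ring
  simp_rw [e1]
  rw [integral_integral_swap hint]
  unfold WickOp
  refine integral_congr_ae (Filter.Eventually.of_forall fun p => ?_)
  obtain ⟨x, ξ⟩ := p
  simp only [Barg_eq]
  have e2 : ∀ I c d e : ℂ, c * I * d * e = (c * d * e) * I := by intros; ring
  rw [e2, ← integral_const_mul]
  refine integral_congr_ae (Filter.Eventually.of_forall fun η => ?_)
  simp only [← FTS_apply f, KK, Prod.mk_sub_mk, neg_sub]
  have : expi (dotp y ξ) * expi (dotp x (η - ξ))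
      = expi (dotp y η) * expi (-(dotp (x - y) (ξ - η))) := by
    rw [← expi_add, ← expi_add]
    congr 1
    simp only [dotp_sub_left, dotp_sub_right]
    ring
  linear_combination (σ x ξ * (starRingEnd ℂ) (a (y - x)) * FTS f η * FTS a (ξ - η)) * this

end Fourier

/-- `Op^{Wick,a}(σ) − Op^{KN}(σ∗|a|²)` is a Kohn–Nirenberg
operator of order `m − (ρ−δ)`. -/
theorem wick_vs_KN (n : ℕ) (hn : 1 ≤ n)
    (m ρ δ : ℝ) (hm : m ≤ 0) (hρ : ρ ≤ 1) (hδρ : δ ≤ ρ) (hδ0 : 0 ≤ δ) (hδ1 : δ < 1)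
    (a : SchwartzMap (Fin n → ℝ) ℂ) (ha : (∫ y, ‖a y‖ ^ 2) = 1)
    (σ : (Fin n → ℝ) → (Fin n → ℝ) → ℂ) (hσ : SymbolClass m ρ δ σ) :
    ∃ τ : (Fin n → ℝ) → (Fin n → ℝ) → ℂ, SymbolClass (m - (ρ - δ)) ρ δ τ ∧
      ∀ (f : SchwartzMap (Fin n → ℝ) ℂ) (x : Fin n → ℝ),
        WickOp (⇑a) σ (⇑f) x
          = ∫ ξ, expi (dotp x ξ)
              * ((∫ z, ((‖a z‖ ^ 2 : ℝ) : ℂ) * σ (x - z) ξ) + τ x ξ)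
              * FT (⇑f) ξ := by
  refine ⟨fun x ξ => TT (KK a) 1 (fun p => σ p.1 p.2) (x, ξ)
    - TT (KK a) 0 (fun p => σ p.1 p.2) (x, ξ), tau_symbol (KK_KB a) hδ0 hσ, fun f x => ?_⟩
  rw [Wick_eq hm hσ a f x]
  refine integral_congr_ae (Filter.Eventually.of_forall fun ξ => ?_)
  simp only [← TT_zero a (PB_of_symbol hσ) x ξ, add_sub_cancel]
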